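/- arXiv:0802.0817 — 6 statements merged into one kernel-verified Lean document; each statement's English description precedes it below -/
import Mathlib

section
/- Let 0<d<1/2 and 0<d̃<1/2, and let φ be a probability density on [-1,1] of the form φ(x) = (1-x)^{1-2d}(1+x)^{1-2d̃} ψ̃(x), where ψ̃ : [-1,1] → [0,∞) is bounded and measurable, continuous at 1 and at -1, with ψ̃(1) ≠ 0 and ψ̃(-1) ≠ 0. Define f(λ) = (1/(2π)) ∫_{-1}^{1} φ(x)/|1 - x e^{iλ}|² dx for λ ∈ [-π,π]. Then ∫_{-π}^{π} log f(λ) dλ > -∞ (i.e. the negative part of log f is integrable on [-π,π]). -/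
/-!
The denominator satisfies `1 - 2 x cos l + x² ≤ 4` for `|x| ≤ 1`, and `φ ≥ 0` has integral `1`.
Hence, wherever the defining integral converges, `f l ≥ 1 / (8π)`, so `min (log (f l)) 0` takes
values in `[-log (8π), 0]`. Wherever the integral diverges, its value in Lean is `0`, hence
`log (f l) = 0` and the bound still holds. A bounded measurable function is integrable
on `[-π, π]`; measurability in `l` is that of a parametric integral.
-/

open Real MeasureTheory Set

/-- For a mixture density of semiparametric form
`φ(x) = (1-x)^(1-2d) (1+x)^(1-2d̃) ψ̃(x)` on `[-1,1]` (Assumption B, case (i)),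
the aggregated spectral density `f` satisfies `∫_{-π}^{π} log f(λ) dλ > -∞`,
i.e. the negative part of `log f` is integrable on `[-π,π]`. -/
theorem stmt_0
    (d dt : ℝ) (hd : 0 < d) (hd2 : d < 1/2) (hdt : 0 < dt) (hdt2 : dt < 1/2)
    (ψ : ℝ → ℝ) (hψ_meas : Measurable ψ)
    (hψ_nonneg : ∀ x ∈ Icc (-1:ℝ) 1, 0 ≤ ψ x)
    (hψ_bdd : ∃ M : ℝ, ∀ x ∈ Icc (-1:ℝ) 1, ψ x ≤ M)
    (hψ_cont1 : ContinuousWithinAt ψ (Icc (-1:ℝ) 1) 1)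
    (hψ_contm1 : ContinuousWithinAt ψ (Icc (-1:ℝ) 1) (-1))
    (hψ1 : ψ 1 ≠ 0) (hψm1 : ψ (-1) ≠ 0)
    (φ : ℝ → ℝ)
    (hφ_eq : ∀ x ∈ Icc (-1:ℝ) 1,
      φ x = (1 - x) ^ (1 - 2*d) * (1 + x) ^ (1 - 2*dt) * ψ x)
    (hφ_zero : ∀ x ∉ Icc (-1:ℝ) 1, φ x = 0)
    (hφ_meas : Measurable φ)
    (hφ_nonneg : ∀ x, 0 ≤ φ x)
    (hφ_prob : ∫ x in (-1:ℝ)..1, φ x = 1)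
    (f : ℝ → ℝ)
    (hf : ∀ l : ℝ, f l =
      (1/(2*π)) * ∫ x in (-1:ℝ)..1, φ x / (1 - 2*x*Real.cos l + x^2)) :
    IntegrableOn (fun l => min (Real.log (f l)) 0) (Icc (-π) π) := by
  have hπ := Real.pi_pos
  have hφ_int : IntervalIntegrable φ volume (-1) 1 := by
    by_contra h
    rw [intervalIntegral.integral_undef h] at hφ_prob
    norm_num at hφ_prob
  have hmeas : Measurable f := by
    have h1 : Measurable (fun p : ℝ × ℝ => φ p.2 / (1 - 2 * p.2 * Real.cos p.1 + p.2 ^ 2)) := by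
      fun_prop
    have h2 := (h1.stronglyMeasurable.integral_prod_right'
      (ν := volume.restrict (Ioc (-1 : ℝ) 1))).measurable
    have h3 : f = fun l => (1 / (2 * π)) *
        ∫ x in Ioc (-1 : ℝ) 1, φ x / (1 - 2 * x * Real.cos l + x ^ 2) := by
      funext l
      rw [hf l, intervalIntegral.integral_of_le (by norm_num)]
    rw [h3]
    exact h2.const_mul _
  have hlow : ∀ l, f l = 0 ∨ 1 / (8 * π) ≤ f l := by
    intro l
    by_cases hI : IntervalIntegrable
        (fun x => φ x / (1 - 2 * x * Real.cos l + x ^ 2)) volume (-1) 1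
    · right
      have hle : ∫ x in (-1 : ℝ)..1, φ x / 4 ≤
          ∫ x in (-1 : ℝ)..1, φ x / (1 - 2 * x * Real.cos l + x ^ 2) := by
        -- The open interval excludes `x = ±1`, where the denominator may vanish.
        refine intervalIntegral.integral_mono_on_of_le_Ioo (by norm_num)
          (hφ_int.div_const 4) hI ?_
        rintro x ⟨hx1, hx2⟩
        have hc1 := Real.cos_le_one l
        have hc2 := Real.neg_one_le_cos l
        have hpos : 0 < 1 - 2 * x * Real.cos l + x ^ 2 := by
          rcases le_total 0 x with h | h
          · nlinarith [mul_nonneg h (sub_nonneg.2 hc1), mul_pos (sub_pos.2 hx2) (sub_pos.2 hx2)]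
          · nlinarith [mul_nonneg (neg_nonneg.2 h) (neg_le_iff_add_nonneg.1 hc2),
              mul_pos (neg_lt_iff_pos_add.1 hx1) (neg_lt_iff_pos_add.1 hx1)]
        have hle4 : 1 - 2 * x * Real.cos l + x ^ 2 ≤ 4 := by
          nlinarith [sq_nonneg (x + Real.cos l), Real.sin_sq_add_cos_sq l,
            mul_nonneg (sub_nonneg.2 hx2.le) (neg_le_iff_add_nonneg.1 hx1.le),
            mul_nonneg (sub_nonneg.2 hc1) (neg_le_iff_add_nonneg.1 hc2)]
        exact div_le_div_of_nonneg_left (hφ_nonneg x) hpos hle4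
      rw [intervalIntegral.integral_div, hφ_prob] at hle
      rw [hf l]
      calc 1 / (8 * π) = 1 / (2 * π) * (1 / 4) := by field_simp; norm_num
        _ ≤ _ := by gcongr
    · left
      rw [hf l, intervalIntegral.integral_undef hI, mul_zero]
  have hlog : 0 ≤ Real.log (8 * π) :=
    Real.log_nonneg (by linarith [Real.pi_gt_three])
  refine Measure.integrableOn_of_bounded (M := Real.log (8 * π)) (by simp)
    ((Real.measurable_log.comp hmeas).min measurable_const).aestronglyMeasurable
    (Filter.Eventually.of_forall fun l => ?_)
  rw [Real.norm_eq_abs, abs_of_nonpos (min_le_right _ _), neg_le]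
  refine le_min ?_ (by linarith)
  rcases hlow l with h | h
  · rw [h, Real.log_zero]
    linarith
  · have h' := Real.log_le_log (by positivity) h
    rwa [one_div, Real.log_inv] at h'
end

section
/- Let 0<d<1/2 and 0<a_*<1, and let φ be a probability density on [-1,1] of the form φ(x) = (1-x)^{1-2d} ψ(x), where ψ : [-1,1] → [0,∞) is bounded and measurable, vanishes outside [-a_*,1], is continuous at 1 and ψ(1) ≠ 0. Define f(λ) = (1/(2π)) ∫_{-1}^{1} φ(x)/|1 - x e^{iλ}|² dx for λ ∈ [-π,π]. Then ∫_{-π}^{π} log f(λ) dλ > -∞ (i.e. the negative part of log f is integrable on [-π,π]). -/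
/-!
For `|x| ≤ 1` the kernel denominator satisfies `1 - 2 x cos l + x² ≤ 4`, so whenever the defining
integral converges, `f l ≥ (1 / 2π) · (1 / 4) ∫ φ = 1 / (8π)`. Since
`1 - 2 x cos l + x² = (x - cos l)² + sin² l ≥ sin² l`, the integral converges as soon as
`sin l ≠ 0`, that is, for almost every `l`. Hence `min (log f) 0` is almost everywhere bounded, and
it is measurable because `f` is a parametric integral of a jointly measurable function.
-/

open Real MeasureTheory Set

/-- Lower bound for the aggregated integral away from the zeros of `sin`, where the integrand is
dominated by `φ x / sin² l`; elsewhere the integral may diverge and take the junk value `0`. -/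
lemma quarter_le_integral (φ : ℝ → ℝ) (hφ_meas : Measurable φ) (hφ_nonneg : ∀ x, 0 ≤ φ x)
    (hφ_prob : ∫ x in (-1:ℝ)..1, φ x = 1) (l : ℝ) (hl : Real.sin l ≠ 0) :
    1/4 ≤ ∫ x in (-1:ℝ)..1, φ x / (1 - 2*x*Real.cos l + x^2) := by
  have hsin : 0 < Real.sin l ^ 2 := by positivity
  have hden : ∀ x : ℝ, Real.sin l ^ 2 ≤ 1 - 2*x*Real.cos l + x^2 := fun x => by
    nlinarith [sq_nonneg (x - Real.cos l), Real.sin_sq_add_cos_sq l]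
  have hint : IntervalIntegrable φ volume (-1) 1 := by
    by_contra h
    rw [intervalIntegral.integral_undef h] at hφ_prob
    exact zero_ne_one hφ_prob
  have hint2 : IntervalIntegrable (fun x => φ x / (1 - 2*x*Real.cos l + x^2)) volume (-1) 1 := by
    refine (hint.div_const (Real.sin l ^ 2)).mono_fun ?_ ?_
    · exact Measurable.aestronglyMeasurable (by fun_prop)
    · refine Filter.Eventually.of_forall fun x => ?_
      have h1 := hden x
      have h2 : 0 < 1 - 2*x*Real.cos l + x^2 := hsin.trans_le h1
      have h3 := hφ_nonneg x
      simp only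
      rw [Real.norm_of_nonneg (by positivity), Real.norm_of_nonneg (by positivity)]
      gcongr
  calc (1/4 : ℝ) = ∫ x in (-1:ℝ)..1, φ x / 4 := by
        rw [intervalIntegral.integral_div, hφ_prob]
    _ ≤ _ := by
        refine intervalIntegral.integral_mono_on (by norm_num) (hint.div_const 4) hint2 ?_
        intro x hx
        have h3 := hφ_nonneg x
        have h2 : 0 < 1 - 2*x*Real.cos l + x^2 := hsin.trans_le (hden x)
        have h4 : 1 - 2*x*Real.cos l + x^2 ≤ 4 := by
          nlinarith [Real.neg_one_le_cos l, Real.cos_le_one l, hx.1, hx.2, sq_nonneg (x + Real.cos l),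
            Real.cos_sq_le_one l]
        gcongr

/-- For a mixture density of semiparametric form
`φ(x) = (1-x)^(1-2d) ψ(x)` with `supp(ψ) ⊂ [-a_*,1]`, `0 < a_* < 1`
(Assumption B, case (ii)), the aggregated spectral density `f` satisfies
`∫_{-π}^{π} log f(λ) dλ > -∞`, i.e. the negative part of `log f` is
integrable on `[-π,π]`. -/
theorem stmt_1
    (d a : ℝ) (hd : 0 < d) (hd2 : d < 1/2) (ha : 0 < a) (ha2 : a < 1)
    (ψ : ℝ → ℝ) (hψ_meas : Measurable ψ)
    (hψ_nonneg : ∀ x ∈ Icc (-1:ℝ) 1, 0 ≤ ψ x)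
    (hψ_bdd : ∃ M : ℝ, ∀ x ∈ Icc (-1:ℝ) 1, ψ x ≤ M)
    (hψ_supp : ∀ x ∈ Icc (-1:ℝ) 1, x ∉ Icc (-a) 1 → ψ x = 0)
    (hψ_cont1 : ContinuousWithinAt ψ (Icc (-1:ℝ) 1) 1)
    (hψ1 : ψ 1 ≠ 0)
    (φ : ℝ → ℝ)
    (hφ_eq : ∀ x ∈ Icc (-1:ℝ) 1, φ x = (1 - x) ^ (1 - 2*d) * ψ x)
    (hφ_zero : ∀ x ∉ Icc (-1:ℝ) 1, φ x = 0)
    (hφ_meas : Measurable φ)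
    (hφ_nonneg : ∀ x, 0 ≤ φ x)
    (hφ_prob : ∫ x in (-1:ℝ)..1, φ x = 1)
    (f : ℝ → ℝ)
    (hf : ∀ l : ℝ, f l =
      (1/(2*π)) * ∫ x in (-1:ℝ)..1, φ x / (1 - 2*x*Real.cos l + x^2)) :
    IntegrableOn (fun l => min (Real.log (f l)) 0) (Icc (-π) π) := by
  have hfm : Measurable f := by
    have hfe : f = fun l =>
        (1/(2*π)) * ∫ x in (-1:ℝ)..1, φ x / (1 - 2*x*Real.cos l + x^2) := funext hf
    have hm : Measurable (fun p : ℝ × ℝ => φ p.2 / (1 - 2*p.2*Real.cos p.1 + p.2^2)) := by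
      fun_prop
    have hs := hm.stronglyMeasurable.integral_prod_right' (ν := volume.restrict (Ioc (-1:ℝ) 1))
    rw [hfe]
    simp only [intervalIntegral.integral_of_le (show (-1:ℝ) ≤ 1 by norm_num)]
    exact hs.measurable.const_mul _
  have hlow : ∀ l : ℝ, Real.sin l ≠ 0 → 1/(2*π) * (1/4) ≤ f l := by
    intro l hl
    rw [hf l]
    have := quarter_le_integral φ hφ_meas hφ_nonneg hφ_prob l hl
    gcongr
  have hsin : ∀ᵐ l : ℝ ∂volume.restrict (Icc (-π) π), Real.sin l ≠ 0 := by
    rw [ae_restrict_iff' measurableSet_Icc]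
    filter_upwards [Measure.ae_ne volume (-π), Measure.ae_ne volume (0:ℝ),
      Measure.ae_ne volume π] with l h1 h2 h3 hl hs
    exact h2 ((Real.sin_eq_zero_iff_of_lt_of_lt (lt_of_le_of_ne hl.1 (Ne.symm h1))
      (lt_of_le_of_ne hl.2 h3)).1 hs)
  refine Measure.integrableOn_of_bounded (M := |Real.log (1/(2*π) * (1/4))|)
    (by simp) (hfm.log.min measurable_const).aestronglyMeasurable ?_
  filter_upwards [hsin] with l hl
  have hlog : Real.log (1/(2*π) * (1/4)) ≤ Real.log (f l) :=
    Real.log_le_log (by positivity) (hlow l hl)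
  rw [Real.norm_of_nonpos (min_le_right _ _)]
  have h1 := neg_abs_le (Real.log (1/(2*π) * (1/4)))
  have h2 := abs_nonneg (Real.log (1/(2*π) * (1/4)))
  have : -|Real.log (1/(2*π) * (1/4))| ≤ min (Real.log (f l)) 0 :=
    le_min (h1.trans hlog) (by linarith)
  linarith
end

section
/- Let 0 < d < 1/2. Then lim_{x → 0^-} |x|^{-d} ∫_{0}^{1} y^{d-1} (1-y)^{1-2d} (1+y) / ((1-xy)(1-y/x)) dy = Γ(d) Γ(1-d). -/
/-!
The substitution `y = |x| t` turns the left-hand side into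
`∫_0^{1/|x|} t^{d-1} (1-|x|t)^{1-2d} (1+|x|t) / ((1+|x|²t)(1+t)) dt`.
As `x → 0⁻` its integrand, extended by zero, converges pointwise on `(0,∞)` to
`t^{d-1}/(1+t)` and is dominated by twice that function (`0 ≤ |x|t ≤ 1` on the domain and the
exponent `1-2d` is positive), so dominated convergence applies (`rescaled_integrand`,
`integrableOn_kernel`).  The limit integral becomes Euler's beta integral `B(d,1-d)` under
`t = u/(1-u)` and hence equals `Γ(d)Γ(1-d)` (`integral_kernel`).
-/

open Real Filter Set

open MeasureTheory in
/-- Real-variable form of the beta integral `B(d, 1-d)`. -/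
lemma beta_real (d : ℝ) (hd : 0 < d) (hd1 : d < 1) :
    IntegrableOn (fun u : ℝ => u ^ (d - 1) * (1 - u) ^ (-d)) (Ioo 0 1) ∧
    ∫ u in Ioo (0:ℝ) 1, u ^ (d - 1) * (1 - u) ^ (-d) = Gamma d * Gamma (1 - d) := by
  have hcoe : ∀ u ∈ Ioo (0:ℝ) 1,
      (u:ℂ) ^ ((d:ℂ) - 1) * (1 - (u:ℂ)) ^ (((1 - d : ℝ) : ℂ) - 1)
        = ((u ^ (d - 1) * (1 - u) ^ (-d) : ℝ) : ℂ) := by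
    intro u hu
    have h1 : (0:ℝ) ≤ 1 - u := by linarith [hu.2]
    rw [Complex.ofReal_mul, Complex.ofReal_cpow hu.1.le, Complex.ofReal_cpow h1]
    push_cast
    congr 2
    ring
  have hconv := Complex.betaIntegral_convergent (u := (d:ℂ)) (v := ((1 - d : ℝ):ℂ))
    (by simpa using hd) (by rw [Complex.ofReal_re]; linarith)
  rw [intervalIntegrable_iff_integrableOn_Ioo_of_le zero_le_one] at hconv
  have hconv' := hconv.congr_fun hcoe measurableSet_Ioo
  refine ⟨by simpa [IntegrableOn] using hconv'.re, ?_⟩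
  have hG := Complex.Gamma_mul_Gamma_eq_betaIntegral (s := (d:ℂ)) (t := ((1 - d : ℝ):ℂ))
    (by simpa using hd) (by rw [Complex.ofReal_re]; linarith)
  have hsum : (d:ℂ) + ((1 - d : ℝ):ℂ) = 1 := by push_cast; ring
  rw [hsum, Complex.Gamma_one, one_mul, Complex.betaIntegral,
    intervalIntegral.integral_of_le zero_le_one, integral_Ioc_eq_integral_Ioo,
    setIntegral_congr_fun measurableSet_Ioo hcoe, integral_complex_ofReal,
    Complex.Gamma_ofReal, Complex.Gamma_ofReal] at hG
  exact_mod_cast hG.symm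

lemma image_div_one_sub : (fun u : ℝ => u / (1 - u)) '' Ioo 0 1 = Ioi 0 := by
  ext t
  constructor
  · rintro ⟨u, hu, rfl⟩
    exact div_pos hu.1 (by linarith [hu.2])
  · intro ht
    have ht : 0 < t := ht
    refine ⟨t / (1 + t), ⟨by positivity, ?_⟩, ?_⟩
    · rw [div_lt_one (by positivity)]; linarith
    · have : (1 + t) ≠ 0 := by positivity
      simp only
      field_simp
      simp

lemma injOn_div_one_sub : InjOn (fun u : ℝ => u / (1 - u)) (Ioo 0 1) := by
  intro u hu v hv h
  have h1 : 1 - u ≠ 0 := by linarith [hu.2]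
  have h2 : 1 - v ≠ 0 := by linarith [hv.2]
  simp only at h
  rw [div_eq_div_iff h1 h2] at h
  linarith

lemma hasDerivWithinAt_div_one_sub (u : ℝ) (hu : u ∈ Ioo (0:ℝ) 1) :
    HasDerivWithinAt (fun u : ℝ => u / (1 - u)) (1 / (1 - u) ^ 2) (Ioo 0 1) u := by
  have h1 : 1 - u ≠ 0 := by linarith [hu.2]
  have h := (hasDerivAt_id u).div ((hasDerivAt_const u (1:ℝ)).sub (hasDerivAt_id u)) h1
  refine HasDerivAt.hasDerivWithinAt ?_
  convert! h using 1
  simp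

/-- The pullback of `t^{d-1}/(1+t) dt` under `t = u/(1-u)` is the beta density. -/
lemma kernel_pullback (d u : ℝ) (hu : u ∈ Ioo (0:ℝ) 1) :
    |1 / (1 - u) ^ 2| • ((u / (1 - u)) ^ (d - 1) / (1 + u / (1 - u)))
      = u ^ (d - 1) * (1 - u) ^ (-d) := by
  have h1 : 0 < 1 - u := by linarith [hu.2]
  have h2 : (1 - u) ^ (-d) = ((1 - u) ^ (d - 1))⁻¹ * (1 - u)⁻¹ := by
    rw [← rpow_neg h1.le, ← rpow_neg_one (1 - u), ← rpow_add h1]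
    congr 1; ring
  have h3 : 1 + u / (1 - u) = 1 / (1 - u) := by field_simp; ring
  rw [abs_of_pos (by positivity), div_rpow hu.1.le h1.le, h2, h3, smul_eq_mul]
  have := (rpow_pos_of_pos h1 (d - 1)).ne'
  field_simp

open MeasureTheory in
lemma integrableOn_kernel (d : ℝ) (hd : 0 < d) (hd1 : d < 1) :
    IntegrableOn (fun t : ℝ => t ^ (d - 1) / (1 + t)) (Ioi 0) := by
  rw [← image_div_one_sub, integrableOn_image_iff_integrableOn_abs_deriv_smul measurableSet_Ioo
    hasDerivWithinAt_div_one_sub injOn_div_one_sub]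
  exact (beta_real d hd hd1).1.congr_fun (fun u hu => (kernel_pullback d u hu).symm)
    measurableSet_Ioo

open MeasureTheory in
lemma integral_kernel (d : ℝ) (hd : 0 < d) (hd1 : d < 1) :
    ∫ t in Ioi (0:ℝ), t ^ (d - 1) / (1 + t) = Gamma d * Gamma (1 - d) := by
  rw [← image_div_one_sub, integral_image_eq_integral_abs_deriv_smul measurableSet_Ioo
    hasDerivWithinAt_div_one_sub injOn_div_one_sub,
    setIntegral_congr_fun measurableSet_Ioo (kernel_pullback d)]
  exact (beta_real d hd hd1).2

/-- The integrand in the variable `t = y/|x|`, without the cut-off `|x| t ≤ 1`. -/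
noncomputable def rescaled (d x t : ℝ) : ℝ :=
  t ^ (d - 1) / (1 + t) * ((1 - |x| * t) ^ (1 - 2 * d) * (1 + |x| * t) / (1 + |x| ^ 2 * t))

open MeasureTheory in
lemma rescaled_integrand (d x : ℝ) (hx : x < 0) :
    |x| ^ (-d) * ∫ y in (0:ℝ)..1,
        y ^ (d - 1) * (1 - y) ^ (1 - 2*d) * (1 + y) / ((1 - x*y) * (1 - y/x))
      = ∫ t in Ioi (0:ℝ), (Iic (|x|⁻¹)).indicator (rescaled d x) t := by
  have ha : 0 < |x| := abs_pos.mpr hx.ne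
  have hxa : x = -|x| := by rw [abs_of_neg hx]; ring
  set a := |x| with ha_def
  set g : ℝ → ℝ := fun y =>
    y ^ (d - 1) * (1 - y) ^ (1 - 2*d) * (1 + y) / ((1 - x*y) * (1 - y/x)) with hg
  have h1 : ∫ y in (0:ℝ)..1, g y = ∫ y in Ioi (0:ℝ), (Iic 1).indicator g y := by
    rw [intervalIntegral.integral_of_le zero_le_one, setIntegral_indicator measurableSet_Iic,
      Ioi_inter_Iic]
  have h2 := integral_comp_mul_left_Ioi' ((Iic 1).indicator g) 0 ha
  rw [mul_zero] at h2
  rw [h1, ← h2, smul_eq_mul, ← integral_const_mul, ← integral_const_mul]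
  refine setIntegral_congr_fun measurableSet_Ioi fun t ht => ?_
  have ht : 0 < t := ht
  by_cases h : a * t ≤ 1
  · have h' : t ≤ a⁻¹ := by rwa [le_inv_comm₀ ht ha, ← one_div, le_div_iff₀ ht]
    have e1 : 1 - x * (a * t) = 1 + a ^ 2 * t := by rw [hxa]; ring
    have e2 : 1 - a * t / x = 1 + t := by rw [hxa]; field_simp; ring
    have e3 : a ^ (-d) * (a * a ^ (d - 1)) = 1 := by
      nth_rewrite 2 [← rpow_one a]
      rw [← rpow_add ha, ← rpow_add ha]
      simp
    simp only [indicator_of_mem (show a * t ∈ Iic 1 from h),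
      indicator_of_mem (show t ∈ Iic a⁻¹ from h'), hg, rescaled, e1, e2, ← ha_def,
      mul_rpow ha.le ht.le]
    calc _ = (a ^ (-d) * (a * a ^ (d - 1))) * (t ^ (d - 1) / (1 + t) *
          ((1 - a * t) ^ (1 - 2 * d) * (1 + a * t) / (1 + a ^ 2 * t))) := by
            field_simp
      _ = _ := by rw [e3, one_mul]
  · have h' : ¬ t ≤ a⁻¹ := by rwa [le_inv_comm₀ ht ha, ← one_div, le_div_iff₀ ht]
    simp [indicator_of_notMem (show a * t ∉ Iic 1 from h),
      indicator_of_notMem (show t ∉ Iic a⁻¹ from h')]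

/-- As `x → 0⁻`,
`|x|^{-d} ∫_0^1 y^{d-1}(1-y)^{1-2d}(1+y)/((1-xy)(1-y/x)) dy → Γ(d)Γ(1-d)`. -/
theorem stmt_9 (d : ℝ) (hd : 0 < d) (hd2 : d < 1/2) :
    Tendsto (fun x : ℝ => |x| ^ (-d) *
        ∫ y in (0:ℝ)..1,
          y ^ (d - 1) * (1 - y) ^ (1 - 2*d) * (1 + y) / ((1 - x*y) * (1 - y/x)))
      (nhdsWithin 0 (Iio 0))
      (nhds (Real.Gamma d * Real.Gamma (1 - d))) := by
  have hd1 : d < 1 := by linarith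
  rw [← integral_kernel d hd hd1]
  refine Tendsto.congr' (f₁ := fun x : ℝ => ∫ t in Ioi (0:ℝ),
    (Iic (|x|⁻¹)).indicator (rescaled d x) t) ?_ ?_
  · filter_upwards [self_mem_nhdsWithin] with x hx
    exact (rescaled_integrand d x hx).symm
  refine MeasureTheory.tendsto_integral_filter_of_dominated_convergence
    (fun t => 2 * (t ^ (d - 1) / (1 + t))) ?_ ?_ ((integrableOn_kernel d hd hd1).const_mul 2) ?_
  · refine Eventually.of_forall fun x => ?_
    refine (Measurable.indicator ?_ measurableSet_Iic).aestronglyMeasurable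
    unfold rescaled
    fun_prop
  · filter_upwards [self_mem_nhdsWithin] with x hx
    have ha : 0 < |x| := abs_pos.mpr (ne_of_lt hx)
    refine (MeasureTheory.ae_restrict_mem measurableSet_Ioi).mono fun t ht => ?_
    have ht : 0 < t := ht
    have hk : 0 ≤ t ^ (d - 1) / (1 + t) := by positivity
    by_cases h : t ≤ |x|⁻¹
    · have h' : |x| * t ≤ 1 := by rwa [le_inv_comm₀ ht ha, ← one_div, le_div_iff₀ ht] at h
      have hat : 0 < |x| * t := by positivity
      have h0 : 0 ≤ 1 - |x| * t := by linarith
      have hp : (1 - |x| * t) ^ (1 - 2 * d) ≤ 1 :=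
        rpow_le_one h0 (by linarith) (by linarith)
      have hp0 : 0 ≤ (1 - |x| * t) ^ (1 - 2 * d) := rpow_nonneg h0 _
      have hden : 1 ≤ 1 + |x| ^ 2 * t := by
        have : 0 < |x| ^ 2 * t := by positivity
        linarith
      rw [indicator_of_mem (show t ∈ Iic |x|⁻¹ from h), rescaled, norm_of_nonneg (by positivity),
        mul_comm 2 (t ^ (d - 1) / (1 + t))]
      refine mul_le_mul_of_nonneg_left ?_ hk
      rw [div_le_iff₀ (by linarith)]
      nlinarith
    · rw [indicator_of_notMem (show t ∉ Iic |x|⁻¹ from h), norm_zero]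
      positivity
  · refine (MeasureTheory.ae_restrict_mem measurableSet_Ioi).mono fun t ht => ?_
    have ht : 0 < t := ht
    have habs : Tendsto (fun x : ℝ => |x|) (nhdsWithin 0 (Iio 0)) (nhds 0) := by
      have : Tendsto (fun x : ℝ => |x|) (nhds 0) (nhds |0|) := continuous_abs.tendsto 0
      rw [abs_zero] at this
      exact this.mono_left nhdsWithin_le_nhds
    have hmul : Tendsto (fun x : ℝ => |x| * t) (nhdsWithin 0 (Iio 0)) (nhds 0) := by
      simpa using habs.mul_const t
    -- For fixed `t` the cut-off `t ≤ |x|⁻¹` is eventually inactive.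
    refine Tendsto.congr' (f₁ := fun x => rescaled d x t) ?_ ?_
    · filter_upwards [self_mem_nhdsWithin, hmul.eventually (gt_mem_nhds one_pos)] with x hx h
      have ha : 0 < |x| := abs_pos.mpr (ne_of_lt hx)
      have h' : t ≤ |x|⁻¹ := by
        rw [le_inv_comm₀ ht ha, ← one_div, le_div_iff₀ ht]; exact h.le
      rw [indicator_of_mem (show t ∈ Iic |x|⁻¹ from h')]
    · unfold rescaled
      have hc1 : Tendsto (fun x : ℝ => (1 - |x| * t) ^ (1 - 2 * d))
          (nhdsWithin 0 (Iio 0)) (nhds 1) := by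
        have := (tendsto_const_nhds (x := (1:ℝ))).sub hmul |>.rpow_const (p := 1 - 2 * d)
          (Or.inl (by norm_num))
        simpa using this
      have hc2 := (tendsto_const_nhds (x := (1:ℝ))).add hmul
      have hc3 := (tendsto_const_nhds (x := (1:ℝ))).add ((habs.pow 2).mul_const t)
      have := ((hc1.mul hc2).div hc3 (by norm_num)).const_mul (t ^ (d - 1) / (1 + t))
      simpa using this
end

section
/- Let κ > 0 and 0 < a_* < 1. Then lim_{x → 0^+} x^{-1} ∫_{-a_*}^{0} |y|^κ / ((1-xy)(1-y/x)) dy = a_*^κ / κ; in particular the function ψ₁(x) = x^{d-1}(1+x) ∫_{-a_*}^{0} |y|^κ / ((1-xy)(1-y/x)) dy satisfies ψ₁(x) ~ (a_*^κ/κ) x^d as x → 0^+ for any 0<d<1/2. -/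
open Real Filter Set

/-!
After the substitution `t = -y`, the factor `x⁻¹` turns the integrand into
`t ^ κ / ((1 + x t) (x + t))`. For `x, t > 0` this is at most `t ^ (κ - 1)`, which is integrable
on `(0, a)` because `κ > 0`, and it tends to `t ^ (κ - 1)` as `x → 0⁺`. Dominated convergence
gives the limit `∫₀ᵃ t ^ (κ - 1) dt = a ^ κ / κ`. The asymptotics of `ψ₁` follow because
`ψ₁(x) / x ^ d` is this quantity multiplied by `1 + x`.
-/

lemma scaled_integral_eq (κ a x : ℝ) (ha : 0 < a) (hx : 0 < x) :
    x⁻¹ * ∫ y in (-a)..(0:ℝ), |y| ^ κ / ((1 - x*y) * (1 - y/x)) =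
      ∫ t in (0:ℝ)..a, t ^ κ / ((1 + x*t) * (x + t)) := by
  have h := intervalIntegral.integral_comp_neg (a := 0) (b := a)
    (fun y : ℝ => |y| ^ κ / ((1 - x*y) * (1 - y/x)))
  rw [neg_zero] at h
  rw [← h, ← intervalIntegral.integral_const_mul]
  refine intervalIntegral.integral_congr fun t ht => ?_
  rw [uIcc_of_le ha.le] at ht
  have h0 : 0 ≤ t := ht.1
  have h1 : 0 < 1 + x * t := by positivity
  have h2 : 0 < x + t := by positivity
  have h3 : 1 - -t / x = (x + t) / x := by field_simp; ring
  have h4 : 1 - x * -t = 1 + x * t := by ring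
  simp only [abs_neg, abs_of_nonneg h0, h3, h4]
  field_simp

lemma tendsto_scaled_integral (κ a : ℝ) (hκ : 0 < κ) (ha : 0 < a) :
    Tendsto (fun x : ℝ => ∫ t in (0:ℝ)..a, t ^ κ / ((1 + x*t) * (x + t)))
      (nhdsWithin 0 (Ioi 0)) (nhds (a ^ κ / κ)) := by
  have hint : ∫ t in (0:ℝ)..a, t ^ (κ - 1) = a ^ κ / κ := by
    rw [integral_rpow (Or.inl (by linarith))]
    simp [Real.zero_rpow hκ.ne']
  rw [← hint]
  refine intervalIntegral.tendsto_integral_filter_of_dominated_convergence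
    (fun t => t ^ (κ - 1)) ?_ ?_
    (intervalIntegral.intervalIntegrable_rpow' (by linarith)) ?_
  · refine Eventually.of_forall fun x => ?_
    exact Measurable.aestronglyMeasurable (by fun_prop)
  · filter_upwards [self_mem_nhdsWithin] with x hx
    refine Eventually.of_forall fun t ht => ?_
    rw [uIoc_of_le ha.le] at ht
    have hx : 0 < x := hx
    have h0 : 0 < t := ht.1
    rw [Real.norm_of_nonneg (by positivity), Real.rpow_sub_one h0.ne']
    gcongr
    nlinarith [mul_pos hx h0, mul_pos (mul_pos hx h0) (add_pos hx h0)]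
  · refine Eventually.of_forall fun t ht => ?_
    rw [uIoc_of_le ha.le] at ht
    have h0 : 0 < t := ht.1
    have hc : ContinuousAt (fun x : ℝ => t ^ κ / ((1 + x*t) * (x + t))) 0 := by
      refine ContinuousAt.div (by fun_prop) (by fun_prop) ?_
      simp [h0.ne']
    have h := hc.tendsto.mono_left (nhdsWithin_le_nhds (s := Ioi 0))
    simpa [Real.rpow_sub_one h0.ne'] using h

/-- As `x → 0⁺`,
`x⁻¹ ∫_{-a_*}^0 |y|^κ/((1-xy)(1-y/x)) dy → a_*^κ/κ`; in particular
`ψ₁(x) = x^{d-1}(1+x) ∫_{-a_*}^0 |y|^κ/((1-xy)(1-y/x)) dy ~ (a_*^κ/κ) x^d`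
as `x → 0⁺`, for any `0 < d < 1/2`. -/
theorem stmt_10 (κ a : ℝ) (hκ : 0 < κ) (ha : 0 < a) (ha2 : a < 1) :
    Tendsto (fun x : ℝ => x⁻¹ *
        ∫ y in (-a)..(0:ℝ), |y| ^ κ / ((1 - x*y) * (1 - y/x)))
      (nhdsWithin 0 (Ioi 0)) (nhds (a ^ κ / κ)) ∧
    ∀ d : ℝ, 0 < d → d < 1/2 →
      Tendsto (fun x : ℝ =>
          (x ^ (d - 1) * (1 + x) *
            ∫ y in (-a)..(0:ℝ), |y| ^ κ / ((1 - x*y) * (1 - y/x))) / x ^ d)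
        (nhdsWithin 0 (Ioi 0)) (nhds (a ^ κ / κ)) := by
  have main : Tendsto (fun x : ℝ => x⁻¹ *
      ∫ y in (-a)..(0:ℝ), |y| ^ κ / ((1 - x*y) * (1 - y/x)))
      (nhdsWithin 0 (Ioi 0)) (nhds (a ^ κ / κ)) := by
    refine (tendsto_scaled_integral κ a hκ ha).congr' ?_
    filter_upwards [self_mem_nhdsWithin] with x hx
    exact (scaled_integral_eq κ a x ha hx).symm
  refine ⟨main, fun d _ _ => ?_⟩
  have h1 : Tendsto (fun x : ℝ => 1 + x) (nhdsWithin 0 (Ioi 0)) (nhds 1) := by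
    have hc : ContinuousAt (fun x : ℝ => 1 + x) 0 := by fun_prop
    simpa using hc.tendsto.mono_left (nhdsWithin_le_nhds (s := Ioi 0))
  have h2 := h1.mul main
  rw [one_mul] at h2
  refine h2.congr' ?_
  filter_upwards [self_mem_nhdsWithin] with x hx
  have hx : 0 < x := hx
  have hd : x ^ d ≠ 0 := (Real.rpow_pos_of_pos hx d).ne'
  rw [Real.rpow_sub_one hx.ne']
  generalize (∫ y in (-a)..(0:ℝ), |y| ^ κ / ((1 - x*y) * (1 - y/x))) = J
  field_simp
end

section
/- Let 0 < d < 1/2, α > -1, and let φ(x) = (1-x)^{1-2d} ψ(x), where ψ : [-1,1] → [0,∞) is measurable, continuous at 1 with ψ(1) ≠ 0. Then ∫_{-1}^{1} φ²(x)(1-x²)^{-α} dx < ∞ if and only if both ∫_{-1}^{1} ψ²(x)(1+x)^{-α} dx < ∞ and α < 3 - 4d. -/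
/-!
On `(-1, 1)` the integrand `φ² (1 - x²)^(-α)` equals `(1 - x)^p g` with `p = 2 - 4d - α` and
`g = ψ² (1 + x)^(-α)`, and `α < 3 - 4d` says exactly that `-1 < p`. Near `1` the function `g` lies
between two positive constants, so there `(1 - x)^p g` is integrable exactly when `(1 - x)^p` is,
that is, when `-1 < p`, while `g` itself is always integrable there. On `(-1, b)` with `b < 1` the
factor `(1 - x)^p` and its inverse are continuous up to the endpoints, so `(1 - x)^p g` is
integrable exactly when `g` is. Both facts are combined in `intervalIntegrable_weight_mul_iff`.
-/

open Real MeasureTheory Set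

lemma intervalIntegrable_one_sub_rpow_iff {b p : ℝ} (hb : b < 1) :
    IntervalIntegrable (fun x : ℝ => (1 - x) ^ p) volume b 1 ↔ -1 < p := by
  have h := IntervalIntegrable.comp_sub_left_iff (a := 1 - b) (b := 0)
    (f := fun x : ℝ => x ^ p) 1
  rw [sub_sub_cancel, sub_zero] at h
  rw [h, intervalIntegrable_iff, uIoc_comm, ← intervalIntegrable_iff,
    intervalIntegrable_iff_integrableOn_Ioo_of_le (by linarith),
    intervalIntegral.integrableOn_Ioo_rpow_iff (by linarith)]

lemma intervalIntegrable_weight_mul_iff_of_lt_one {b p : ℝ} (hb : -1 < b) (hb1 : b < 1)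
    (g : ℝ → ℝ) :
    IntervalIntegrable (fun x => (1 - x) ^ p * g x) volume (-1) b ↔
      IntervalIntegrable g volume (-1) b := by
  have hpos : ∀ x ∈ uIcc (-1) b, 0 < 1 - x := by
    intro x hx
    rw [uIcc_of_le hb.le] at hx
    linarith [hx.2]
  have hc : ∀ q : ℝ, ContinuousOn (fun x : ℝ => (1 - x) ^ q) (uIcc (-1) b) := fun q =>
    (continuousOn_const.sub continuousOn_id).rpow_const fun x hx => Or.inl (hpos x hx).ne'
  refine ⟨fun h => ?_, fun h => h.continuousOn_mul (hc p)⟩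
  refine (h.continuousOn_mul (hc (-p))).congr fun x hx => ?_
  have hx0 := hpos x (uIoc_subset_uIcc hx)
  rw [← mul_assoc, ← rpow_add hx0, neg_add_cancel, rpow_zero, one_mul]

/-- Multiplying by a function bounded away from `0` and `∞` does not affect integrability. -/
lemma integrableOn_mul_iff_of_bounds {s : Set ℝ} (hs : MeasurableSet s) {m M : ℝ} (hm : 0 < m)
    (f g : ℝ → ℝ) (hg : Measurable g) (hmM : ∀ x ∈ s, m ≤ g x ∧ g x ≤ M) :
    IntegrableOn (fun x => f x * g x) s ↔ IntegrableOn f s := by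
  refine ⟨fun h => ?_, fun h => ?_⟩
  · have h' : IntegrableOn (fun x => f x * g x * (g x)⁻¹) s := by
      refine Integrable.mul_bdd (c := m⁻¹) h hg.inv.aestronglyMeasurable ?_
      refine ae_restrict_of_forall_mem hs fun x hx => ?_
      have h1 := (hmM x hx).1
      rw [Real.norm_of_nonneg (inv_nonneg.2 (hm.le.trans h1))]
      exact inv_anti₀ hm h1
    refine h'.congr_fun (fun x hx => ?_) hs
    exact mul_inv_cancel_right₀ (hm.trans_le (hmM x hx).1).ne' _
  · refine Integrable.mul_bdd (c := M) h hg.aestronglyMeasurable ?_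
    refine ae_restrict_of_forall_mem hs fun x hx => ?_
    rw [Real.norm_of_nonneg (hm.le.trans (hmM x hx).1)]
    exact (hmM x hx).2

lemma intervalIntegrable_weight_mul_iff {b p m M : ℝ} (hb : -1 < b) (hb1 : b < 1) (hm : 0 < m)
    (g : ℝ → ℝ) (hg : Measurable g) (hmM : ∀ x ∈ Ioo b 1, m ≤ g x ∧ g x ≤ M) :
    IntervalIntegrable (fun x => (1 - x) ^ p * g x) volume (-1) 1 ↔
      IntervalIntegrable g volume (-1) 1 ∧ -1 < p := by
  have hsplit : ∀ f : ℝ → ℝ, IntervalIntegrable f volume (-1) 1 ↔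
      IntervalIntegrable f volume (-1) b ∧ IntervalIntegrable f volume b 1 := fun f => by
    refine ⟨fun h => ⟨h.mono_set ?_, h.mono_set ?_⟩, fun h => h.1.trans h.2⟩
    · rw [uIcc_of_le hb.le, uIcc_of_le (by linarith)]
      exact Icc_subset_Icc_right hb1.le
    · rw [uIcc_of_le hb1.le, uIcc_of_le (by linarith)]
      exact Icc_subset_Icc_left hb.le
  have hright : IntervalIntegrable (fun x => (1 - x) ^ p * g x) volume b 1 ↔ -1 < p := by
    rw [← intervalIntegrable_one_sub_rpow_iff hb1,
      intervalIntegrable_iff_integrableOn_Ioo_of_le hb1.le,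
      intervalIntegrable_iff_integrableOn_Ioo_of_le hb1.le]
    exact integrableOn_mul_iff_of_bounds measurableSet_Ioo hm _ g hg hmM
  have hgright : IntervalIntegrable g volume b 1 := by
    rw [intervalIntegrable_iff_integrableOn_Ioo_of_le hb1.le]
    have h := (integrableOn_mul_iff_of_bounds measurableSet_Ioo hm (fun _ => 1) g hg hmM).2
      (integrableOn_const (by simp))
    simpa using h
  rw [hsplit, hsplit g, intervalIntegrable_weight_mul_iff_of_lt_one hb hb1, hright]
  tauto

/-- For a mixture density `φ(x) = (1-x)^{1-2d} ψ(x)` of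
Assumption B form, the Gegenbauer-expansion condition
`∫_{-1}^1 φ²(x)(1-x²)^{-α} dx < ∞` holds if and only if
`∫_{-1}^1 ψ²(x)(1+x)^{-α} dx < ∞` and `α < 3 - 4d`. -/
theorem stmt_12
    (d α : ℝ) (hd : 0 < d) (hd2 : d < 1/2) (hα : -1 < α)
    (ψ : ℝ → ℝ) (hψ_meas : Measurable ψ)
    (hψ_nonneg : ∀ x ∈ Icc (-1:ℝ) 1, 0 ≤ ψ x)
    (hψ_cont : ContinuousWithinAt ψ (Icc (-1:ℝ) 1) 1)
    (hψ1 : ψ 1 ≠ 0)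
    (φ : ℝ → ℝ)
    (hφ : ∀ x ∈ Icc (-1:ℝ) 1, φ x = (1 - x) ^ (1 - 2*d) * ψ x) :
    IntervalIntegrable (fun x => (φ x)^2 * (1 - x^2) ^ (-α)) volume (-1) 1 ↔
      (IntervalIntegrable (fun x => (ψ x)^2 * (1 + x) ^ (-α)) volume (-1) 1 ∧
        α < 3 - 4*d) := by
  set g : ℝ → ℝ := fun x => (ψ x)^2 * (1 + x) ^ (-α) with hgdef
  have hg : Measurable g := by fun_prop
  have hg1 : 0 < g 1 := by
    have : (0:ℝ) < (1 + 1) ^ (-α) := by positivity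
    simp only [hgdef]
    positivity
  have hgc : ContinuousWithinAt g (Icc (-1:ℝ) 1) 1 :=
    (hψ_cont.pow 2).mul <| (continuousWithinAt_const.add continuousWithinAt_id).rpow_const
      (Or.inl (by norm_num))
  obtain ⟨b, hb, hb1, hbd⟩ : ∃ b : ℝ, -1 < b ∧ b < 1 ∧
      ∀ x ∈ Ioo b 1, g 1 / 2 ≤ g x ∧ g x ≤ 2 * g 1 := by
    have hev := hgc.eventually (Icc_mem_nhds (show g 1 / 2 < g 1 by linarith)
      (show g 1 < 2 * g 1 by linarith))
    obtain ⟨ε, hε, h⟩ := Metric.mem_nhdsWithin_iff.1 hev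
    refine ⟨max (1 - ε) 0, lt_max_of_lt_right (by norm_num), max_lt (by linarith) one_pos,
      fun x hx => ?_⟩
    obtain ⟨h1, h2⟩ := max_lt_iff.1 hx.1
    refine h ⟨?_, by linarith, hx.2.le⟩
    rw [Metric.mem_ball, Real.dist_eq, abs_lt]
    constructor <;> linarith [hx.2]
  have key := intervalIntegrable_weight_mul_iff (p := 2 - 4*d - α) hb hb1 (half_pos hg1) g hg hbd
  have hp : -1 < 2 - 4*d - α ↔ α < 3 - 4*d := by constructor <;> intro h <;> linarith
  rw [← hp, ← key, intervalIntegrable_iff_integrableOn_Ioo_of_le (by norm_num),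
    intervalIntegrable_iff_integrableOn_Ioo_of_le (by norm_num)]
  refine integrableOn_congr_fun (fun x hx => ?_) measurableSet_Ioo
  have h1 : 0 < 1 - x := by linarith [hx.2]
  have h2 : 0 < 1 + x := by linarith [hx.1]
  simp only [hgdef]
  rw [hφ x (Ioo_subset_Icc_self hx), show 1 - x^2 = (1 - x) * (1 + x) by ring,
    mul_rpow h1.le h2.le, mul_pow, ← rpow_natCast ((1 - x) ^ (1 - 2*d)), ← rpow_mul h1.le,
    show 2 - 4*d - α = (1 - 2*d) * (2:ℕ) + (-α) by push_cast; ring, rpow_add h1]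
  ring
end

section
/- Let φ be a probability density on [-1,1] with ∫_{-1}^{1} φ(x)/(1-x²) dx < ∞, and let f(λ) = (1/(2π)) ∫_{-1}^{1} φ(x)/|1 - x e^{iλ}|² dx. Then for every integer m ≥ 0, ∫_{-π}^{π} f(λ) (cos(mλ) - cos((m+2)λ)) dλ = ∫_{-1}^{1} y^{m} φ(y) dy. -/
open Real MeasureTheory Set

/-!
For `|x| < 1` the Poisson integral formula applied to `z ↦ z ^ n` on the unit circle gives
`∫_{-π}^{π} cos (n l) / (1 - 2 x cos l + x²) dl = 2π x ^ n / (1 - x²)`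
(`integral_cos_div_kernel`). Taking the difference of the cases `n = m` and `n = m + 2`, the factor
`1 - x²` cancels and `2π x ^ m` remains. The theorem follows by exchanging the two integrals:
the case `n = 0` shows that the kernel `1 / (1 - 2 x cos l + x²)` has total mass `2π / (1 - x²)`,
so the hypothesis on `φ x / (1 - x²)` is exactly what Tonelli's theorem needs
(`integrable_kernel_prod`).
-/

lemma kernel_pos {x : ℝ} (hx : |x| < 1) (l : ℝ) : 0 < 1 - 2 * x * Real.cos l + x ^ 2 := by
  have h1 : x * Real.cos l ≤ |x| :=
    (le_abs_self _).trans <| by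
      rw [abs_mul]
      exact mul_le_of_le_one_right (abs_nonneg x) (Real.abs_cos_le_one l)
  nlinarith [pow_pos (sub_pos.2 hx) 2, sq_abs x]

lemma continuous_kernel {x : ℝ} (hx : |x| < 1) {g : ℝ → ℝ} (hg : Continuous g) :
    Continuous fun l => g l / (1 - 2 * x * Real.cos l + x ^ 2) :=
  hg.div (by fun_prop) fun l => (kernel_pos hx l).ne'

lemma integral_cos_div_kernel (n : ℕ) {x : ℝ} (hx : |x| < 1) :
    ∫ l in (-π)..π, Real.cos (n * l) / (1 - 2 * x * Real.cos l + x ^ 2)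
      = 2 * π * x ^ n / (1 - x ^ 2) := by
  have hx2 : 0 < 1 - x ^ 2 := by
    have := (sq_lt_one_iff_abs_lt_one x).2 hx
    linarith
  -- The integral over one period may be taken over `[0, 2π]`.
  have hper : Function.Periodic
      (fun l => Real.cos (n * l) / (1 - 2 * x * Real.cos l + x ^ 2)) (2 * π) := by
    intro l
    have : (n : ℝ) * (l + 2 * π) = n * l + n * (2 * π) := by ring
    simp only [Real.cos_add_two_pi, this, Real.cos_add_nat_mul_two_pi]
  have hshift := hper.intervalIntegral_add_eq (-π) 0
  rw [show -π + 2 * π = π by ring, zero_add] at hshift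
  rw [hshift]
  have hd : DiffContOnCl ℂ (fun z : ℂ => z ^ n) (Metric.ball 0 1) :=
    (differentiable_id.pow n).diffContOnCl
  have hw : (x : ℂ) ∈ Metric.ball (0 : ℂ) 1 := by simpa using hx
  have hP := hd.circleAverage_poissonKernel_smul hw
  rw [Real.circleAverage_def] at hP
  have hker : ∀ l : ℝ, poissonKernel 0 (x : ℂ) (circleMap 0 1 l)
      = (1 - x ^ 2) / (1 - 2 * x * Real.cos l + x ^ 2) := by
    intro l
    rw [poissonKernel_def]
    simp only [sub_zero, norm_circleMap_zero, Complex.norm_real, Real.norm_eq_abs, sq_abs, abs_one]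
    rw [← Complex.normSq_eq_norm_sq]
    congr 1
    · norm_num
    · simp [circleMap, Complex.normSq_apply, Complex.exp_ofReal_mul_I_re,
        Complex.exp_ofReal_mul_I_im]
      nlinarith [Real.sin_sq_add_cos_sq l]
  have hpow : ∀ l : ℝ, (circleMap 0 1 l ^ n).re = Real.cos (n * l) := by
    intro l
    rw [circleMap_zero, Complex.ofReal_one, one_mul, ← Complex.exp_nat_mul, ← mul_assoc]
    simpa using Complex.exp_ofReal_mul_I_re ((n : ℝ) * l)
  have hcont : Continuous fun l : ℝ =>
      (((1 - x ^ 2) / (1 - 2 * x * Real.cos l + x ^ 2) : ℝ)) • (circleMap 0 1 l ^ n) :=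
    (continuous_kernel hx continuous_const).smul ((continuous_circleMap 0 1).pow n)
  have hre := congrArg Complex.re hP
  simp only [Pi.smul_apply', hker, Complex.smul_re] at hre
  rw [← Complex.reCLM_apply (∫ _ in _.._, _),
    ← Complex.reCLM.intervalIntegral_comp_comm (hcont.intervalIntegrable _ _)] at hre
  simp only [Complex.reCLM_apply, Complex.smul_re, hpow, smul_eq_mul, ← Complex.ofReal_pow,
    Complex.ofReal_re] at hre
  rw [← hre, eq_div_iff hx2.ne', ← intervalIntegral.integral_mul_const, mul_inv_cancel_left₀
    (by positivity)]
  exact intervalIntegral.integral_congr fun l _ => by ring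

/-- Tonelli's criterion for the two-variable integrand, tested along the `l`-fibres. -/
lemma integrable_kernel_prod {φ : ℝ → ℝ} (hφ_meas : Measurable φ) (hφ_nonneg : ∀ x, 0 ≤ φ x)
    (hφ_mix : IntervalIntegrable (fun x => φ x / (1 - x ^ 2)) volume (-1) 1)
    {c : ℝ → ℝ} (hc : Continuous c) (hc2 : ∀ l, |c l| ≤ 2) :
    IntegrableOn (Function.uncurry fun l x => c l * (φ x / (1 - 2 * x * Real.cos l + x ^ 2)))
      (uIoc (-π) π ×ˢ uIoc (-1) 1) := by
  have hπ : -π ≤ π := by linarith [Real.pi_pos]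
  have hae : ∀ᵐ x ∂(volume.restrict (uIoc (-1 : ℝ) 1)), |x| < 1 := by
    rw [uIoc_of_le (by norm_num), ← restrict_Ioo_eq_restrict_Ioc]
    exact (ae_restrict_mem measurableSet_Ioo).mono fun x hx => abs_lt.2 hx
  have hmeas : Measurable (Function.uncurry fun l x : ℝ =>
      c l * (φ x / (1 - 2 * x * Real.cos l + x ^ 2))) := by
    have := hc.measurable
    unfold Function.uncurry
    fun_prop
  -- It suffices to bound the integrand by twice the nonnegative kernel `φ x / (1 - 2 x cos l + x²)`,
  -- its numerator written as `cos (0 * l)` to match `integral_cos_div_kernel` at `n = 0`.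
  have hker : Measurable (Function.uncurry fun l x : ℝ =>
      2 * (φ x * (Real.cos ((0 : ℕ) * l) / (1 - 2 * x * Real.cos l + x ^ 2)))) := by
    unfold Function.uncurry
    fun_prop
  rw [IntegrableOn, Measure.volume_eq_prod, ← Measure.prod_restrict]
  have hdom : Integrable (Function.uncurry fun l x : ℝ =>
      2 * (φ x * (Real.cos ((0 : ℕ) * l) / (1 - 2 * x * Real.cos l + x ^ 2))))
      ((volume.restrict (uIoc (-π) π)).prod (volume.restrict (uIoc (-1 : ℝ) 1))) := by
    rw [integrable_prod_iff' hker.aestronglyMeasurable]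
    constructor
    · filter_upwards [hae] with x hx
      exact (((continuous_kernel hx (g := fun l => Real.cos ((0 : ℕ) * l))
        (by fun_prop)).const_mul (φ x)).const_mul 2).intervalIntegrable (-π) π |>.def'
    · refine (hφ_mix.def'.const_mul (2 * (2 * π))).congr ?_
      filter_upwards [hae] with x hx
      have hnn : ∀ l : ℝ, ‖Function.uncurry (fun l x : ℝ =>
          2 * (φ x * (Real.cos ((0 : ℕ) * l) / (1 - 2 * x * Real.cos l + x ^ 2)))) (l, x)‖
          = 2 * φ x * (Real.cos ((0 : ℕ) * l) / (1 - 2 * x * Real.cos l + x ^ 2)) := by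
        intro l
        have h1 := kernel_pos hx l
        have h2 := hφ_nonneg x
        simp only [Function.uncurry, Nat.cast_zero, zero_mul, Real.cos_zero]
        rw [Real.norm_of_nonneg (by positivity)]
        ring
      simp_rw [hnn]
      rw [integral_const_mul, uIoc_of_le hπ, ← intervalIntegral.integral_of_le hπ,
        integral_cos_div_kernel 0 hx]
      ring
  refine hdom.mono hmeas.aestronglyMeasurable (Filter.Eventually.of_forall fun p => ?_)
  have h2 := hc2 p.1
  simp only [Function.uncurry, Nat.cast_zero, zero_mul, Real.cos_zero, norm_mul, norm_div,
    Real.norm_eq_abs, abs_two, mul_one_div]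
  gcongr

/-- For a mixture density `φ` and its aggregated spectral
density `f`, one has `σ(m) - σ(m+2) = ∫_{-1}^1 y^m φ(y) dy`, i.e.
`∫_{-π}^{π} f(λ)(cos(mλ) - cos((m+2)λ)) dλ = ∫_{-1}^1 y^m φ(y) dy`
for every integer `m ≥ 0`. -/
theorem stmt_14
    (φ : ℝ → ℝ) (hφ_meas : Measurable φ)
    (hφ_nonneg : ∀ x, 0 ≤ φ x)
    (hφ_zero : ∀ x ∉ Icc (-1:ℝ) 1, φ x = 0)
    (hφ_prob : ∫ x in (-1:ℝ)..1, φ x = 1)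
    (hφ_mix : IntervalIntegrable (fun x => φ x / (1 - x^2)) volume (-1) 1)
    (f : ℝ → ℝ)
    (hf : ∀ l : ℝ, f l =
      (1/(2*π)) * ∫ x in (-1:ℝ)..1, φ x / (1 - 2*x*Real.cos l + x^2)) :
    ∀ m : ℕ,
      ∫ l in (-π)..π, f l * (Real.cos (m * l) - Real.cos ((m + 2) * l))
        = ∫ y in (-1:ℝ)..1, y ^ m * φ y := by
  intro m
  have hc2 : ∀ l : ℝ, |Real.cos (m * l) - Real.cos ((m + 2) * l)| ≤ 2 := by
    intro l
    rw [abs_le]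
    constructor <;> linarith [Real.cos_le_one (m * l), Real.neg_one_le_cos (m * l),
      Real.cos_le_one ((m + 2) * l), Real.neg_one_le_cos ((m + 2) * l)]
  have hswap := intervalIntegral_intervalIntegral_swap
    (integrable_kernel_prod hφ_meas hφ_nonneg hφ_mix
      (c := fun l => Real.cos (m * l) - Real.cos ((m + 2) * l)) (by fun_prop) hc2)
  have hleft : ∀ l : ℝ, f l * (Real.cos (m * l) - Real.cos ((m + 2) * l))
      = (1 / (2 * π)) * ∫ x in (-1:ℝ)..1, (Real.cos (m * l) - Real.cos ((m + 2) * l))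
        * (φ x / (1 - 2 * x * Real.cos l + x ^ 2)) := by
    intro l
    rw [hf, intervalIntegral.integral_const_mul]
    ring
  simp_rw [hleft]
  rw [intervalIntegral.integral_const_mul, hswap, ← intervalIntegral.integral_const_mul]
  -- The kernel identity needs `|x| < 1`; the endpoint `x = 1` is a null set.
  rw [intervalIntegral.integral_of_le (by norm_num), intervalIntegral.integral_of_le (by norm_num),
    integral_Ioc_eq_integral_Ioo, integral_Ioc_eq_integral_Ioo]
  refine setIntegral_congr_fun measurableSet_Ioo fun x hx => ?_
  have hx1 : |x| < 1 := abs_lt.2 hx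
  have hx2 : 1 - x ^ 2 ≠ 0 := by
    have := (sq_lt_one_iff_abs_lt_one x).2 hx1
    linarith
  have hsplit : ∀ l : ℝ, (Real.cos (m * l) - Real.cos ((m + 2) * l))
        * (φ x / (1 - 2 * x * Real.cos l + x ^ 2))
      = φ x * (Real.cos (m * l) / (1 - 2 * x * Real.cos l + x ^ 2)
        - Real.cos ((m + 2 : ℕ) * l) / (1 - 2 * x * Real.cos l + x ^ 2)) := by
    intro l
    push_cast
    ring
  simp_rw [hsplit]
  rw [intervalIntegral.integral_const_mul, intervalIntegral.integral_sub
    ((continuous_kernel hx1 (by fun_prop)).intervalIntegrable _ _)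
    ((continuous_kernel hx1 (by fun_prop)).intervalIntegrable _ _),
    integral_cos_div_kernel m hx1, integral_cos_div_kernel (m + 2) hx1]
  have hπ := Real.pi_ne_zero
  field_simp
  ring
end
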